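/- Fix vectors x, y ∈ ℝ^N and define α := ⟨x, y⟩. Let P ∈ ℝ^{N×N} be the orthogonal projection matrix onto a uniformly random n-dimensional subspace of ℝ^N (1 ≤ n ≤ N). Then there is a universal constant C > 0 such that for every k > 0 there exists N₀ such that for all N ≥ N₀: with probability at least 1 − N^{−k}, |xᵀPy − α·n/N| ≤ ‖x‖·‖y‖·(log N)^C·√n/N. -/

import Mathlib

open MeasureTheory Matrix

/-- Euclidean norm of a vector in `ℝ^k`. -/
noncomputable def eucNorm {k : ℕ} (v : Fin k → ℝ) : ℝ := Real.sqrt (∑ i, (v i) ^ 2)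

/-!
For a sign vector `ε` the centred quadratic form `ε ⬝ᵥ A *ᵥ ε - tr A` is a polynomial of degree two
in independent signs with second moment at most `2 ‖A‖²`, where `‖A‖` is the Frobenius norm.
Hypercontractivity (Bonami's lemma) bounds its high moments by the second one, so it exceeds
`√(32 e) L² ‖A‖` with probability at most `exp (-L)`.

All sign vectors have length `√N`. If the law of `A` is orthogonally invariant, `v ⬝ᵥ A *ᵥ v` has
therefore the same distribution as `(‖v‖² / N) (ε ⬝ᵥ A *ᵥ ε)` for each fixed `ε`, hence also for a
random `ε` independent of `A`: the bound above, applied conditionally on `A`, controls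
`v ⬝ᵥ A *ᵥ v` with `L` a multiple of `log N`. Polarization passes to bilinear forms, and a
projection of rank `n` has trace and squared Frobenius norm `n`.
-/

open scoped BigOperators Finset symmDiff

section Chebyshev

variable {κ : Type*} [Fintype κ]

theorem card_lt_abs_le_of_expect_pow_le {f : κ → ℝ} {p : ℕ} (hp : Even p) (hp0 : p ≠ 0)
    {t δ : ℝ} (ht : 0 ≤ t) (hδ : 0 ≤ δ) (hf : 𝔼 z, f z ^ p ≤ δ * t ^ p) :
    (#{z | t < |f z|} : ℝ) ≤ δ * Fintype.card κ := by
  rcases ht.eq_or_lt with rfl | ht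
  · rw [zero_pow hp0, mul_zero] at hf
    have hf0 : (fun z ↦ f z ^ p) = 0 := by
      have hpow : 0 ≤ fun z ↦ f z ^ p := fun z ↦ hp.pow_nonneg _
      exact (Fintype.expect_eq_zero_iff_of_nonneg hpow).1
        (hf.antisymm (Finset.expect_nonneg fun z _ ↦ hpow z))
    have hfz (z : κ) : f z = 0 := pow_eq_zero_iff hp0 |>.1 (congrFun hf0 z)
    simp only [hfz, abs_zero, lt_self_iff_false, Finset.filter_false, Finset.card_empty,
      Nat.cast_zero]
    positivity
  · refine le_of_mul_le_mul_right ?_ (pow_pos ht p)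
    calc (#{z | t < |f z|} : ℝ) * t ^ p = ∑ z with t < |f z|, t ^ p := by
          rw [Finset.sum_const, nsmul_eq_mul]
      _ ≤ ∑ z with t < |f z|, f z ^ p := Finset.sum_le_sum fun z hz ↦ by
          rw [← hp.pow_abs (f z)]
          exact pow_le_pow_left₀ ht.le (Finset.mem_filter.1 hz).2.le p
      _ ≤ ∑ z, f z ^ p := Finset.sum_le_sum_of_subset_of_nonneg (Finset.filter_subset _ _)
          fun z _ _ ↦ hp.pow_nonneg _
      _ = Fintype.card κ * 𝔼 z, f z ^ p := (Fintype.card_mul_expect _).symm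
      _ ≤ Fintype.card κ * (δ * t ^ p) := by gcongr
      _ = δ * Fintype.card κ * t ^ p := by ring

end Chebyshev

section Walsh

variable {ι : Type*}

/-- The vector of signs `±1` in `ℝ^ι` given by a point `z` of the discrete cube. -/
def signVec (z : ι → ℤˣ) : ι → ℝ := fun i ↦ ((z i : ℤ) : ℝ)

theorem signVec_mul_self (z : ι → ℤˣ) (i : ι) : signVec z i * signVec z i = 1 := by
  rcases Int.units_eq_one_or (z i) with h | h <;> simp [signVec, h]

theorem signVec_dotProduct_self [Fintype ι] (z : ι → ℤˣ) :
    signVec z ⬝ᵥ signVec z = Fintype.card ι := by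
  simp [dotProduct, signVec_mul_self]

/-- The Walsh functions: the characters `z ↦ ∏ i ∈ S, z i` of the discrete cube. -/
def walsh (S : Finset ι) (z : ι → ℤˣ) : ℝ := ∏ i ∈ S, signVec z i

theorem walsh_singleton (i : ι) (z : ι → ℤˣ) : walsh {i} z = signVec z i :=
  Finset.prod_singleton _ _

theorem walsh_apply_mul (S : Finset ι) (w z : ι → ℤˣ) :
    walsh S (w * z) = walsh S w * walsh S z := by
  simp [walsh, signVec, Finset.prod_mul_distrib]

variable [DecidableEq ι]

theorem walsh_pair {i j : ι} (hij : i ≠ j) (z : ι → ℤˣ) :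
    walsh {i, j} z = signVec z i * signVec z j :=
  Finset.prod_pair hij

theorem walsh_mul_walsh (S T : Finset ι) : walsh S * walsh T = walsh (S ∆ T) := by
  funext z
  have hinter : (∏ i ∈ S ∩ T, signVec z i) * ∏ i ∈ S ∩ T, signVec z i = 1 := by
    simp [← Finset.prod_mul_distrib, signVec_mul_self]
  simp only [Pi.mul_apply, walsh, symmDiff_def, Finset.sup_eq_union]
  rw [Finset.prod_union (disjoint_sdiff_sdiff (x := S) (y := T)),
    ← Finset.prod_inter_mul_prod_sdiff S T, ← Finset.prod_inter_mul_prod_sdiff T S,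
    Finset.inter_comm T S]
  linear_combination (∏ i ∈ S \ T, signVec z i) * (∏ i ∈ T \ S, signVec z i) * hinter

theorem walsh_mulSingle_neg_one (S : Finset ι) (i : ι) :
    walsh S (Pi.mulSingle i (-1)) = if i ∈ S then -1 else 1 := by
  have hfactor (j : ι) :
      signVec (Pi.mulSingle i (-1)) j = if j = i then (-1 : ℝ) else 1 := by
    by_cases hji : j = i <;> simp [signVec, hji]
  simp only [walsh, hfactor, Finset.prod_ite_eq']

variable [Fintype ι]

theorem expect_eq_zero_of_flip_eq_neg {f : (ι → ℤˣ) → ℝ} (i : ι)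
    (hf : ∀ z, f (Pi.mulSingle i (-1) * z) = -f z) : 𝔼 z, f z = 0 := by
  have hflip : 𝔼 z, f z = 𝔼 z, -f z :=
    Fintype.expect_equiv (Equiv.mulLeft (Pi.mulSingle i (-1))) _ _ fun z ↦ by simp [hf]
  rw [Finset.expect_neg_distrib] at hflip
  linarith

theorem expect_walsh (S : Finset ι) : 𝔼 z, walsh S z = if S = ∅ then 1 else 0 := by
  split_ifs with hS
  · simp [hS, walsh]
  · obtain ⟨i, hi⟩ := Finset.nonempty_iff_ne_empty.2 hS
    exact expect_eq_zero_of_flip_eq_neg i fun z ↦ by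
      rw [walsh_apply_mul, walsh_mulSingle_neg_one, if_pos hi, neg_one_mul]

theorem expect_walsh_mul_walsh (S T : Finset ι) :
    𝔼 z, walsh S z * walsh T z = if S = T then 1 else 0 := by
  simp only [← Pi.mul_apply, walsh_mul_walsh, expect_walsh, ← Finset.bot_eq_empty,
    symmDiff_eq_bot]

end Walsh

section Hypercontractivity

variable {ι : Type*}

/-- The functions on the discrete cube which are polynomials of degree at most `d` in the signs
with indices in `s`. -/
def walshSpan (s : Finset ι) (d : ℕ) : Submodule ℝ ((ι → ℤˣ) → ℝ) :=
  Submodule.span ℝ {f | ∃ S ⊆ s, #S ≤ d ∧ walsh S = f}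

theorem walsh_mem_walshSpan {s S : Finset ι} {d : ℕ} (hS : S ⊆ s) (hd : #S ≤ d) :
    walsh S ∈ walshSpan s d :=
  Submodule.subset_span ⟨S, hS, hd, rfl⟩

theorem exists_eq_const_of_mem_walshSpan {s : Finset ι} {d : ℕ} (h : s = ∅ ∨ d = 0)
    {f : (ι → ℤˣ) → ℝ} (hf : f ∈ walshSpan s d) : ∃ c : ℝ, f = fun _ ↦ c := by
  suffices hle : walshSpan s d ≤ Submodule.span ℝ {1} by
    obtain ⟨c, rfl⟩ := Submodule.mem_span_singleton.1 (hle hf)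
    exact ⟨c, by ext; simp⟩
  refine Submodule.span_mono ?_
  rintro _ ⟨S, hS, hd, rfl⟩
  obtain rfl : S = ∅ := by
    rcases h with rfl | rfl
    · exact Finset.subset_empty.1 hS
    · exact Finset.card_eq_zero.1 (Nat.le_zero.1 hd)
  ext
  simp [walsh]

theorem mul_mem_walshSpan {s : Finset ι} {d e : ℕ} {f g : (ι → ℤˣ) → ℝ}
    (hf : f ∈ walshSpan s d) (hg : g ∈ walshSpan s e) : f * g ∈ walshSpan s (d + e) := by
  classical
  have hmul := Submodule.mul_mem_mul hf hg
  rw [walshSpan, walshSpan, Submodule.span_mul_span] at hmul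
  refine Submodule.span_mono ?_ hmul
  rintro _ ⟨_, ⟨S, hS, hSd, rfl⟩, _, ⟨T, hT, hTe, rfl⟩, rfl⟩
  have hST : S ∆ T ⊆ S ∪ T := symmDiff_le_sup
  refine ⟨S ∆ T, hST.trans (Finset.union_subset hS hT), ?_, (walsh_mul_walsh S T).symm⟩
  calc #(S ∆ T) ≤ #(S ∪ T) := Finset.card_le_card hST
    _ ≤ #S + #T := Finset.card_union_le S T
    _ ≤ d + e := add_le_add hSd hTe

theorem pow_mem_walshSpan {s : Finset ι} {d : ℕ} {f : (ι → ℤˣ) → ℝ} (hf : f ∈ walshSpan s d)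
    (m : ℕ) : f ^ m ∈ walshSpan s (m * d) := by
  induction m with
  | zero =>
    rw [pow_zero, show (1 : (ι → ℤˣ) → ℝ) = walsh ∅ by ext; simp [walsh]]
    exact walsh_mem_walshSpan (Finset.empty_subset s) (by simp)
  | succ m ih =>
    rw [pow_succ, add_one_mul]
    exact mul_mem_walshSpan ih hf

variable [DecidableEq ι]

theorem apply_flip_of_mem_walshSpan {s : Finset ι} {d : ℕ} {f : (ι → ℤˣ) → ℝ}
    (hf : f ∈ walshSpan s d) {i : ι} (hi : i ∉ s) (z : ι → ℤˣ) :
    f (Pi.mulSingle i (-1) * z) = f z := by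
  induction hf using Submodule.span_induction with
  | mem f hf =>
    obtain ⟨S, hS, -, rfl⟩ := hf
    rw [walsh_apply_mul, walsh_mulSingle_neg_one, if_neg fun h ↦ hi (hS h), one_mul]
  | zero => rfl
  | add f g _ _ hf hg => simp only [Pi.add_apply, hf, hg]
  | smul c f _ hf => simp only [Pi.smul_apply, hf]

theorem exists_eq_add_walsh_mul {s : Finset ι} {i : ι} {d : ℕ} {f : (ι → ℤˣ) → ℝ}
    (hf : f ∈ walshSpan (insert i s) (d + 1)) :
    ∃ g ∈ walshSpan s (d + 1), ∃ h ∈ walshSpan s d, f = g + walsh {i} * h := by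
  induction hf using Submodule.span_induction with
  | mem f hf =>
    obtain ⟨S, hS, hd, rfl⟩ := hf
    by_cases hiS : i ∈ S
    · refine ⟨0, zero_mem _, walsh (S.erase i), walsh_mem_walshSpan
        (Finset.subset_insert_iff.1 hS) ?_, ?_⟩
      · rw [Finset.card_erase_of_mem hiS]
        omega
      · funext z
        rw [zero_add, Pi.mul_apply, walsh_singleton]
        exact (Finset.mul_prod_erase S (signVec z) hiS).symm
    · exact ⟨walsh S, walsh_mem_walshSpan ((Finset.subset_insert_iff_of_notMem hiS).1 hS) hd,
        0, zero_mem _, by simp⟩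
  | zero => exact ⟨0, zero_mem _, 0, zero_mem _, by simp⟩
  | add f₁ f₂ _ _ h₁ h₂ =>
    obtain ⟨g₁, hg₁, h₁, hh₁, rfl⟩ := h₁
    obtain ⟨g₂, hg₂, h₂, hh₂, rfl⟩ := h₂
    exact ⟨g₁ + g₂, add_mem hg₁ hg₂, h₁ + h₂, add_mem hh₁ hh₂, by ring⟩
  | smul c f _ hf =>
    obtain ⟨g, hg, h, hh, rfl⟩ := hf
    exact ⟨c • g, Submodule.smul_mem _ c hg, c • h, Submodule.smul_mem _ c hh, by
      rw [smul_add, mul_smul_comm]⟩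

variable [Fintype ι]

section Peeling

variable {i : ι} {g h : (ι → ℤˣ) → ℝ} (hg : ∀ z, g (Pi.mulSingle i (-1) * z) = g z)
  (hh : ∀ z, h (Pi.mulSingle i (-1) * z) = h z)

include hg in
theorem expect_walsh_singleton_mul_eq_zero : 𝔼 z, walsh {i} z * g z = 0 :=
  expect_eq_zero_of_flip_eq_neg i fun z ↦ by
    rw [walsh_apply_mul, walsh_mulSingle_neg_one, if_pos (Finset.mem_singleton_self i), hg]
    ring

include hg hh

theorem expect_add_walsh_mul_sq :
    𝔼 z, (g z + walsh {i} z * h z) ^ 2 = 𝔼 z, g z ^ 2 + 𝔼 z, h z ^ 2 := by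
  have hexpand (z : ι → ℤˣ) : (g z + walsh {i} z * h z) ^ 2 =
      g z ^ 2 + h z ^ 2 + walsh {i} z * (2 * g z * h z) := by
    rw [walsh_singleton]
    linear_combination h z ^ 2 * signVec_mul_self z i
  have hodd := expect_walsh_singleton_mul_eq_zero (g := fun z ↦ 2 * g z * h z)
    fun z ↦ by rw [hg, hh]
  simp only [hexpand, Finset.expect_add_distrib, hodd, add_zero]

theorem expect_add_walsh_mul_pow_four :
    𝔼 z, (g z + walsh {i} z * h z) ^ 4 =
      𝔼 z, g z ^ 4 + 6 * 𝔼 z, g z ^ 2 * h z ^ 2 + 𝔼 z, h z ^ 4 := by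
  have hexpand (z : ι → ℤˣ) : (g z + walsh {i} z * h z) ^ 4 =
      g z ^ 4 + 6 * (g z ^ 2 * h z ^ 2) + h z ^ 4 +
        walsh {i} z * (4 * g z ^ 3 * h z + 4 * g z * h z ^ 3) := by
    rw [walsh_singleton]
    linear_combination (6 * g z ^ 2 * h z ^ 2 + 4 * g z * h z ^ 3 * signVec z i +
      h z ^ 4 * (signVec z i ^ 2 + 1)) * signVec_mul_self z i
  have hodd := expect_walsh_singleton_mul_eq_zero
    (g := fun z ↦ 4 * g z ^ 3 * h z + 4 * g z * h z ^ 3) fun z ↦ by rw [hg, hh]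
  simp only [hexpand, Finset.expect_add_distrib, ← Finset.mul_expect, hodd, add_zero]

theorem expect_add_walsh_mul_pow_four_le {K : ℝ} (hK : 0 ≤ K)
    (hg4 : 𝔼 z, g z ^ 4 ≤ 9 * K * (𝔼 z, g z ^ 2) ^ 2)
    (hh4 : 𝔼 z, h z ^ 4 ≤ K * (𝔼 z, h z ^ 2) ^ 2) :
    𝔼 z, (g z + walsh {i} z * h z) ^ 4 ≤
      9 * K * (𝔼 z, (g z + walsh {i} z * h z) ^ 2) ^ 2 := by
  rw [expect_add_walsh_mul_sq hg hh, expect_add_walsh_mul_pow_four hg hh]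
  have hcs := Finset.expect_mul_sq_le_sq_mul_sq Finset.univ (fun z ↦ g z ^ 2) fun z ↦ h z ^ 2
  simp only [← pow_mul, Nat.reduceMul] at hcs
  have hmixed : 𝔼 z, g z ^ 2 * h z ^ 2 ≤ 3 * K * (𝔼 z, g z ^ 2) * 𝔼 z, h z ^ 2 := by
    refine le_of_sq_le_sq ?_ (by positivity)
    calc (𝔼 z, g z ^ 2 * h z ^ 2) ^ 2 ≤ (𝔼 z, g z ^ 4) * 𝔼 z, h z ^ 4 := hcs
      _ ≤ 9 * K * (𝔼 z, g z ^ 2) ^ 2 * (K * (𝔼 z, h z ^ 2) ^ 2) := by gcongr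
      _ = (3 * K * (𝔼 z, g z ^ 2) * 𝔼 z, h z ^ 2) ^ 2 := by ring
  calc 𝔼 z, g z ^ 4 + 6 * 𝔼 z, g z ^ 2 * h z ^ 2 + 𝔼 z, h z ^ 4
      ≤ 9 * K * (𝔼 z, g z ^ 2) ^ 2 + 6 * (3 * K * (𝔼 z, g z ^ 2) * 𝔼 z, h z ^ 2) +
          9 * (K * (𝔼 z, h z ^ 2) ^ 2) := by
        gcongr
        linarith [show 0 ≤ 𝔼 z, h z ^ 4 by positivity]
    _ = 9 * K * (𝔼 z, g z ^ 2 + 𝔼 z, h z ^ 2) ^ 2 := by ring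

end Peeling

/-- **Bonami's lemma**. -/
theorem expect_pow_four_le_of_mem_walshSpan {s : Finset ι} {d : ℕ} {f : (ι → ℤˣ) → ℝ}
    (hf : f ∈ walshSpan s d) : 𝔼 z, f z ^ 4 ≤ 9 ^ d * (𝔼 z, f z ^ 2) ^ 2 := by
  induction s using Finset.induction_on generalizing d f with
  | empty =>
    obtain ⟨c, rfl⟩ := exists_eq_const_of_mem_walshSpan (.inl rfl) hf
    simp only [Fintype.expect_const, ← pow_mul]
    exact le_mul_of_one_le_left (by positivity) (one_le_pow₀ (by norm_num))
  | insert i s hi ih =>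
    rcases d with _ | d
    · obtain ⟨c, rfl⟩ := exists_eq_const_of_mem_walshSpan (.inr rfl) hf
      simp only [Fintype.expect_const, ← pow_mul]
      exact le_mul_of_one_le_left (by positivity) (one_le_pow₀ (by norm_num))
    obtain ⟨g, hg, h, hh, rfl⟩ := exists_eq_add_walsh_mul hf
    have hg4 := ih hg
    rw [pow_succ' (9 : ℝ) d] at hg4 ⊢
    exact expect_add_walsh_mul_pow_four_le (apply_flip_of_mem_walshSpan hg hi)
      (apply_flip_of_mem_walshSpan hh hi) (by positivity) hg4 (ih hh)

theorem expect_pow_two_pow_le_of_mem_walshSpan {s : Finset ι} {d : ℕ} {f : (ι → ℤˣ) → ℝ}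
    (hf : f ∈ walshSpan s d) (j : ℕ) :
    𝔼 z, f z ^ 2 ^ (j + 1) ≤ (3 ^ (j * d) * 𝔼 z, f z ^ 2) ^ 2 ^ j := by
  induction j with
  | zero => simp
  | succ j ih =>
    have hbonami := expect_pow_four_le_of_mem_walshSpan (pow_mem_walshSpan hf (2 ^ j))
    simp only [Pi.pow_apply, ← pow_mul] at hbonami
    rw [show 2 ^ j * 4 = 2 ^ (j + 1 + 1) by ring, show 2 ^ j * 2 = 2 ^ (j + 1) by ring] at hbonami
    have hnonneg : 0 ≤ 𝔼 z, f z ^ 2 ^ (j + 1) :=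
      Finset.expect_nonneg fun z _ ↦ (even_two.pow_of_ne_zero j.succ_ne_zero).pow_nonneg _
    calc 𝔼 z, f z ^ 2 ^ (j + 1 + 1)
        ≤ 9 ^ (2 ^ j * d) * (𝔼 z, f z ^ 2 ^ (j + 1)) ^ 2 := hbonami
      _ ≤ 9 ^ (2 ^ j * d) * ((3 ^ (j * d) * 𝔼 z, f z ^ 2) ^ 2 ^ j) ^ 2 := by gcongr
      _ = (3 ^ ((j + 1) * d) * 𝔼 z, f z ^ 2) ^ 2 ^ (j + 1) := by
        rw [show (9 : ℝ) = 3 ^ 2 by norm_num, ← pow_mul]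
        ring

theorem card_lt_abs_le_of_mem_walshSpan {s : Finset ι} {d : ℕ} {f : (ι → ℤˣ) → ℝ}
    (hf : f ∈ walshSpan s d) {L t : ℝ} (hL : 1 ≤ L) (ht : 0 ≤ t)
    (hLt : Real.exp 1 * ((2 * L) ^ (2 * d) * 𝔼 z, f z ^ 2) ≤ t ^ 2) :
    (#{z | t < |f z|} : ℝ) ≤ Real.exp (-L) * Fintype.card (ι → ℤˣ) := by
  -- Markov's inequality is applied to the moment of order `2 ^ (j + 1)`, where `L < 2 ^ j ≤ 2 * L`.
  obtain ⟨i, hi, hi'⟩ := exists_nat_pow_near hL one_lt_two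
  set j := i + 1
  have hconst : (3 : ℝ) ^ (j * d) ≤ (2 * L) ^ (2 * d) := by
    calc (3 : ℝ) ^ (j * d) ≤ 4 ^ (j * d) := by gcongr; norm_num
      _ = (2 * 2 ^ i) ^ (2 * d) := by
        rw [← pow_succ', ← pow_mul, show (4 : ℝ) = 2 ^ 2 by norm_num, ← pow_mul]
        congr 1
        ring
      _ ≤ (2 * L) ^ (2 * d) := by gcongr
  have hmoment : 𝔼 z, f z ^ 2 ^ (j + 1) ≤ Real.exp (-L) * t ^ 2 ^ (j + 1) := by
    calc 𝔼 z, f z ^ 2 ^ (j + 1) ≤ (3 ^ (j * d) * 𝔼 z, f z ^ 2) ^ 2 ^ j :=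
          expect_pow_two_pow_le_of_mem_walshSpan hf j
      _ ≤ ((2 * L) ^ (2 * d) * 𝔼 z, f z ^ 2) ^ 2 ^ j := by gcongr
      _ ≤ (Real.exp (-1) * t ^ 2) ^ 2 ^ j := by
        refine pow_le_pow_left₀ (by positivity) ?_ _
        rwa [Real.exp_neg, ← div_eq_inv_mul, le_div_iff₀' (Real.exp_pos 1)]
      _ = Real.exp (-2 ^ j) * t ^ 2 ^ (j + 1) := by
        rw [mul_pow, ← Real.exp_nat_mul, ← pow_mul, ← pow_succ']
        push_cast
        ring_nf
      _ ≤ Real.exp (-L) * t ^ 2 ^ (j + 1) := by gcongr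
  exact card_lt_abs_le_of_expect_pow_le (even_two.pow_of_ne_zero j.succ_ne_zero) (by positivity)
    ht (Real.exp_nonneg _) hmoment

end Hypercontractivity

section QuadraticForm

variable {ι : Type*} [Fintype ι] [DecidableEq ι]

theorem signVec_dotProduct_mulVec_sub_trace (A : Matrix ι ι ℝ) (z : ι → ℤˣ) :
    signVec z ⬝ᵥ A *ᵥ signVec z - A.trace =
      ∑ p ∈ Finset.univ.offDiag, A p.1 p.2 * walsh {p.1, p.2} z := by
  have hwalsh : ∑ p ∈ Finset.univ.offDiag, A p.1 p.2 * walsh {p.1, p.2} z =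
      ∑ p ∈ Finset.univ.offDiag, A p.1 p.2 * (signVec z p.1 * signVec z p.2) :=
    Finset.sum_congr rfl fun p hp ↦ by rw [walsh_pair (Finset.mem_offDiag.1 hp).2.2]
  have hdiag : ∑ p ∈ Finset.univ.diag, A p.1 p.2 * (signVec z p.1 * signVec z p.2) =
      A.trace := by
    simp [Finset.sum_diag, signVec_mul_self, trace]
  rw [hwalsh, ← hdiag, sub_eq_iff_eq_add', ← Finset.sum_union (Finset.disjoint_diag_offDiag _),
    Finset.diag_union_offDiag, Finset.sum_product]
  simp only [dotProduct, mulVec, Finset.mul_sum]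
  exact Finset.sum_congr rfl fun i _ ↦ Finset.sum_congr rfl fun j _ ↦ by ring

omit [DecidableEq ι] in
theorem signVec_dotProduct_mulVec_sub_trace_mem_walshSpan (A : Matrix ι ι ℝ) :
    (fun z ↦ signVec z ⬝ᵥ A *ᵥ signVec z - A.trace) ∈ walshSpan Finset.univ 2 := by
  classical
  have hsum : (fun z ↦ signVec z ⬝ᵥ A *ᵥ signVec z - A.trace) =
      ∑ p ∈ Finset.univ.offDiag, A p.1 p.2 • walsh {p.1, p.2} := by
    funext z
    simp only [signVec_dotProduct_mulVec_sub_trace, Finset.sum_apply, Pi.smul_apply, smul_eq_mul]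
  rw [hsum]
  exact sum_mem fun p _ ↦ Submodule.smul_mem _ _
    (walsh_mem_walshSpan (Finset.subset_univ _) Finset.card_le_two)

omit [Fintype ι] in
theorem pair_eq_pair_iff_eq_or_eq_swap {p q : ι × ι} :
    ({p.1, p.2} : Finset ι) = {q.1, q.2} ↔ q = p ∨ q = p.swap := by
  rw [← Finset.coe_inj]
  simp only [Finset.coe_pair, Set.pair_eq_pair_iff, Prod.ext_iff, Prod.swap]
  grind

theorem filter_offDiag_pair_eq {p : ι × ι} (hp : p.1 ≠ p.2) :
    (Finset.univ.offDiag.filter fun q : ι × ι ↦ ({p.1, p.2} : Finset ι) = {q.1, q.2}) =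
      {p, p.swap} := by
  ext q
  simp only [Finset.mem_filter, pair_eq_pair_iff_eq_or_eq_swap, Finset.mem_insert,
    Finset.mem_singleton, and_iff_right_iff_imp]
  rintro (rfl | rfl)
  · simpa using hp
  · simpa using hp.symm

theorem expect_signVec_dotProduct_mulVec_sub_trace_sq (A : Matrix ι ι ℝ) :
    𝔼 z, (signVec z ⬝ᵥ A *ᵥ signVec z - A.trace) ^ 2 =
      ∑ p ∈ Finset.univ.offDiag, A p.1 p.2 * (A p.1 p.2 + A p.2 p.1) := by
  calc 𝔼 z, (signVec z ⬝ᵥ A *ᵥ signVec z - A.trace) ^ 2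
      = ∑ p ∈ Finset.univ.offDiag, ∑ q ∈ Finset.univ.offDiag,
          A p.1 p.2 * A q.1 q.2 * if ({p.1, p.2} : Finset ι) = {q.1, q.2} then 1 else 0 := by
        simp only [signVec_dotProduct_mulVec_sub_trace, sq, Finset.sum_mul_sum,
          mul_mul_mul_comm, Finset.expect_sum_comm, ← Finset.mul_expect, expect_walsh_mul_walsh]
    _ = ∑ p ∈ Finset.univ.offDiag, A p.1 p.2 * (A p.1 p.2 + A p.2 p.1) := by
        refine Finset.sum_congr rfl fun p hp ↦ ?_
        have hne : p.1 ≠ p.2 := (Finset.mem_offDiag.1 hp).2.2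
        simp only [mul_ite, mul_one, mul_zero]
        rw [← Finset.sum_filter, filter_offDiag_pair_eq hne,
          Finset.sum_pair fun h ↦ hne (congrArg Prod.fst h), Prod.fst_swap, Prod.snd_swap, mul_add]

theorem expect_signVec_dotProduct_mulVec_sub_trace_sq_le (A : Matrix ι ι ℝ) :
    𝔼 z, (signVec z ⬝ᵥ A *ᵥ signVec z - A.trace) ^ 2 ≤ 2 * ∑ i, ∑ j, A i j ^ 2 := by
  calc 𝔼 z, (signVec z ⬝ᵥ A *ᵥ signVec z - A.trace) ^ 2
      = ∑ p ∈ Finset.univ.offDiag, A p.1 p.2 * (A p.1 p.2 + A p.2 p.1) :=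
        expect_signVec_dotProduct_mulVec_sub_trace_sq A
    _ ≤ ∑ p ∈ Finset.univ.offDiag, (3 / 2 * A p.1 p.2 ^ 2 + 1 / 2 * A p.2 p.1 ^ 2) := by
        gcongr with p
        nlinarith [sq_nonneg (A p.1 p.2 - A p.2 p.1)]
    _ ≤ ∑ p : ι × ι, (3 / 2 * A p.1 p.2 ^ 2 + 1 / 2 * A p.2 p.1 ^ 2) :=
        Finset.sum_le_sum_of_subset_of_nonneg (Finset.subset_univ _) fun p _ _ ↦ by positivity
    _ = 2 * ∑ i, ∑ j, A i j ^ 2 := by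
        rw [Finset.sum_add_distrib, ← Finset.mul_sum, ← Finset.mul_sum,
          Fintype.sum_prod_type, Fintype.sum_prod_type_right]
        ring

theorem card_lt_abs_signVec_dotProduct_mulVec_sub_trace_le (A : Matrix ι ι ℝ) {s L t : ℝ}
    (hA : ∑ i, ∑ j, A i j ^ 2 ≤ s) (hL : 1 ≤ L) (ht : 0 ≤ t)
    (hLt : 32 * Real.exp 1 * L ^ 4 * s ≤ t ^ 2) :
    (#{z | t < |signVec z ⬝ᵥ A *ᵥ signVec z - A.trace|} : ℝ) ≤
      Real.exp (-L) * Fintype.card (ι → ℤˣ) := by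
  refine card_lt_abs_le_of_mem_walshSpan
    (signVec_dotProduct_mulVec_sub_trace_mem_walshSpan A) hL ht ?_
  calc Real.exp 1 * ((2 * L) ^ (2 * 2) * 𝔼 z, (signVec z ⬝ᵥ A *ᵥ signVec z - A.trace) ^ 2)
      ≤ Real.exp 1 * ((2 * L) ^ (2 * 2) * (2 * s)) := by
        gcongr
        exact (expect_signVec_dotProduct_mulVec_sub_trace_sq_le A).trans (by gcongr)
    _ = 32 * Real.exp 1 * L ^ 4 * s := by ring
    _ ≤ t ^ 2 := hLt

end QuadraticForm

section OrthogonalInvariance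

theorem measure_le_of_forall_measure_eq_of_card_le {Ω κ : Type*} [Fintype κ] [Nonempty κ]
    {mΩ : MeasurableSpace Ω} {μ : Measure Ω} [IsProbabilityMeasure μ] {B : κ → Set Ω}
    (hB : ∀ z, MeasurableSet (B z)) {c : ENNReal} (hc : ∀ z, μ (B z) = c) {δ : ℝ}
    [∀ ω, DecidablePred fun z ↦ ω ∈ B z]
    (hδ : ∀ᵐ ω ∂μ, (#{z | ω ∈ B z} : ℝ) ≤ δ * Fintype.card κ) : c ≤ ENNReal.ofReal δ := by
  have hsum : Fintype.card κ * c = ∫⁻ ω, ∑ z, (B z).indicator 1 ω ∂μ := by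
    rw [lintegral_finsetSum _ fun z _ ↦ measurable_one.indicator (hB z)]
    simp [hB, hc]
  have hle : ∫⁻ ω, ∑ z, (B z).indicator 1 ω ∂μ ≤
      ∫⁻ _, Fintype.card κ * ENNReal.ofReal δ ∂μ := by
    refine lintegral_mono_ae (hδ.mono fun ω hω ↦ ?_)
    calc ∑ z, (B z).indicator (1 : Ω → ENNReal) ω = ENNReal.ofReal (#{z | ω ∈ B z}) := by
          simp [Set.indicator_apply, Finset.sum_boole]
      _ ≤ ENNReal.ofReal (Fintype.card κ * δ) := ENNReal.ofReal_le_ofReal (by linarith)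
      _ = Fintype.card κ * ENNReal.ofReal δ := by
          rw [ENNReal.ofReal_mul (Nat.cast_nonneg _), ENNReal.ofReal_natCast]
  rw [← hsum, lintegral_const, measure_univ, mul_one] at hle
  exact (ENNReal.mul_le_mul_iff_right (by simp) (by simp)).1 hle

variable {ι : Type*} [Fintype ι] [DecidableEq ι]

theorem exists_orthogonal_mulVec_eq {u v : ι → ℝ} (huv : u ⬝ᵥ u = v ⬝ᵥ v) :
    ∃ R : Matrix ι ι ℝ, Rᵀ * R = 1 ∧ R *ᵥ u = v := by
  have hnorm : ‖WithLp.toLp 2 u‖ = ‖WithLp.toLp 2 v‖ := by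
    simp only [EuclideanSpace.norm_eq, Real.norm_eq_abs, sq_abs]
    simpa only [dotProduct, ← sq] using congrArg Real.sqrt huv
  let b := EuclideanSpace.basisFun ι ℝ
  let ρ := (ℝ ∙ (WithLp.toLp 2 u - WithLp.toLp 2 v))ᗮ.reflection
  refine ⟨LinearMap.toMatrix b.toBasis b.toBasis ρ.toLinearMap, ?_, ?_⟩
  · exact mem_unitaryGroup_iff'.1 (ρ.toMatrix_mem_unitaryGroup b b)
  · have hρ : ρ (WithLp.toLp 2 u) = WithLp.toLp 2 v := Submodule.reflection_sub hnorm
    have hrepr (w : EuclideanSpace ℝ ι) : ⇑(b.toBasis.repr w) = w.ofLp := by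
      funext i
      rw [OrthonormalBasis.coe_toBasis_repr_apply, EuclideanSpace.basisFun_repr]
    have happly := LinearMap.toMatrix_mulVec_repr b.toBasis b.toBasis ρ.toLinearMap
      (WithLp.toLp 2 u)
    rw [hrepr, hrepr] at happly
    exact happly.trans (congrArg WithLp.ofLp hρ)

/-- The distribution of a random square matrix is orthogonally invariant if it is preserved by
conjugation by every orthogonal matrix. Matrices are encoded as curried functions, which carry the
product `σ`-algebra. -/
def OrthogonallyInvariant (μ : Measure (ι → ι → ℝ)) : Prop :=
  ∀ R : Matrix ι ι ℝ, Rᵀ * R = 1 →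
    Measure.map (fun A => fun i j => (Rᵀ * of A * R) i j) μ = μ

omit [DecidableEq ι] in
theorem measurable_dotProduct_mulVec (u v : ι → ℝ) :
    Measurable fun A : ι → ι → ℝ ↦ u ⬝ᵥ of A *ᵥ v := by
  simp only [dotProduct, mulVec, of_apply]
  fun_prop

variable {μ : Measure (ι → ι → ℝ)}

theorem OrthogonallyInvariant.measure_quadraticForm_mem_eq (hμ : OrthogonallyInvariant μ)
    {u v : ι → ℝ} (huv : u ⬝ᵥ u = v ⬝ᵥ v) {E : Set ℝ} (hE : MeasurableSet E) :
    μ {A | u ⬝ᵥ of A *ᵥ u ∈ E} = μ {A | v ⬝ᵥ of A *ᵥ v ∈ E} := by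
  obtain ⟨R, hR, rfl⟩ := exists_orthogonal_mulVec_eq huv
  have hconj : Measurable fun (A : ι → ι → ℝ) i j ↦ (Rᵀ * of A * R) i j := by
    simp only [mul_apply, of_apply]
    fun_prop
  have hform (A : Matrix ι ι ℝ) : u ⬝ᵥ (Rᵀ * A * R) *ᵥ u = (R *ᵥ u) ⬝ᵥ A *ᵥ (R *ᵥ u) := by
    rw [mul_assoc, ← mulVec_mulVec, dotProduct_mulVec,
      vecMul_transpose, mulVec_mulVec]
  calc μ {A | u ⬝ᵥ of A *ᵥ u ∈ E}
      = Measure.map (fun A i j ↦ (Rᵀ * of A * R) i j) μ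
          {A | u ⬝ᵥ of A *ᵥ u ∈ E} := by rw [hμ R hR]
    _ = μ {A | u ⬝ᵥ (Rᵀ * of A * R) *ᵥ u ∈ E} :=
        Measure.map_apply hconj (measurable_dotProduct_mulVec u u hE)
    _ = μ {A | (R *ᵥ u) ⬝ᵥ of A *ᵥ (R *ᵥ u) ∈ E} := by simp only [hform]

/-- Conditionally on the matrix, invariance allows the vector to be replaced by a random sign
vector of the same length. -/
theorem OrthogonallyInvariant.measure_lt_abs_quadraticForm_sub_le [IsProbabilityMeasure μ]
    (hμ : OrthogonallyInvariant μ) {τ s : ℝ}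
    (hA : ∀ᵐ A ∂μ, (of A).trace = τ ∧ ∑ i, ∑ j, A i j ^ 2 ≤ s) {L t : ℝ}
    (hL : 1 ≤ L) (ht : 0 ≤ t) (hLt : 32 * Real.exp 1 * L ^ 4 * s ≤ t ^ 2) (v : ι → ℝ) :
    μ {A | v ⬝ᵥ v * (t / Fintype.card ι) <
        |v ⬝ᵥ of A *ᵥ v - v ⬝ᵥ v * (τ / Fintype.card ι)|} ≤
      ENNReal.ofReal (Real.exp (-L)) := by
  simp only [← mul_div_assoc, mul_div_right_comm]
  set c := v ⬝ᵥ v / Fintype.card ι with hc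
  have hc0 : 0 ≤ c := div_nonneg (Finset.sum_nonneg fun i _ ↦ mul_self_nonneg _) (by positivity)
  have hlength (z : ι → ℤˣ) : v ⬝ᵥ v = (√c • signVec z) ⬝ᵥ (√c • signVec z) := by
    rw [smul_dotProduct, dotProduct_smul, signVec_dotProduct_self, smul_smul,
      Real.mul_self_sqrt hc0, smul_eq_mul, hc]
    rcases isEmpty_or_nonempty ι with hι | hι
    · simp [dotProduct]
    · field_simp
  have hscale (z : ι → ℤˣ) (A : Matrix ι ι ℝ) :
      (√c • signVec z) ⬝ᵥ A *ᵥ (√c • signVec z) = c * (signVec z ⬝ᵥ A *ᵥ signVec z) := by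
    rw [mulVec_smul, smul_dotProduct, dotProduct_smul, smul_smul, Real.mul_self_sqrt hc0,
      smul_eq_mul]
  have hE : MeasurableSet {r : ℝ | c * t < |r - c * τ|} :=
    measurableSet_lt (by fun_prop) (by fun_prop)
  classical
  refine measure_le_of_forall_measure_eq_of_card_le
    (B := fun z ↦ {A | (√c • signVec z) ⬝ᵥ of A *ᵥ (√c • signVec z) ∈
      {r : ℝ | c * t < |r - c * τ|}})
    (fun z ↦ measurable_dotProduct_mulVec _ _ hE)
    (fun z ↦ (hμ.measure_quadraticForm_mem_eq (hlength z) hE).symm) (hA.mono fun A ⟨hτ, hs⟩ ↦ ?_)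
  refine le_trans ?_ (card_lt_abs_signVec_dotProduct_mulVec_sub_trace_le (of A) hs hL ht hLt)
  refine Nat.cast_le.2 (Finset.card_le_card (Finset.monotone_filter_right _ fun z _ hz ↦ ?_))
  rw [Set.mem_ofPred_eq, Set.mem_ofPred_eq, hscale, ← mul_sub, abs_mul, abs_of_nonneg hc0] at hz
  rw [hτ]
  exact lt_of_mul_lt_mul_left hz hc0

omit [DecidableEq ι] in
/-- Scaling `x` and `y` to a common length before polarizing produces the product of their norms
rather than the sum of the squares. -/
theorem abs_bilinearForm_sub_le_of_quadraticForm {A : Matrix ι ι ℝ} (hA : Aᵀ = A) {c d : ℝ}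
    {x y : ι → ℝ}
    (h : ∀ w ∈ ({√(y ⬝ᵥ y) • x + √(x ⬝ᵥ x) • y, √(y ⬝ᵥ y) • x - √(x ⬝ᵥ x) • y} : Set (ι → ℝ)),
      |w ⬝ᵥ A *ᵥ w - w ⬝ᵥ w * c| ≤ w ⬝ᵥ w * d) :
    |x ⬝ᵥ A *ᵥ y - x ⬝ᵥ y * c| ≤ √(x ⬝ᵥ x) * √(y ⬝ᵥ y) * d := by
  have hself (w : ι → ℝ) : 0 ≤ w ⬝ᵥ w := Finset.sum_nonneg fun i _ ↦ mul_self_nonneg _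
  rcases eq_or_ne x 0 with rfl | hx
  · simp
  rcases eq_or_ne y 0 with rfl | hy
  · simp
  set p := √(x ⬝ᵥ x)
  set q := √(y ⬝ᵥ y)
  have hp : 0 < p := Real.sqrt_pos.2 ((hself x).lt_of_ne' (dotProduct_self_eq_zero.not.2 hx))
  have hq : 0 < q := Real.sqrt_pos.2 ((hself y).lt_of_ne' (dotProduct_self_eq_zero.not.2 hy))
  have hpx : x ⬝ᵥ x = p ^ 2 := (Real.sq_sqrt (hself x)).symm
  have hqy : y ⬝ᵥ y = q ^ 2 := (Real.sq_sqrt (hself y)).symm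
  have hyx : y ⬝ᵥ A *ᵥ x = x ⬝ᵥ A *ᵥ y := by
    rw [dotProduct_mulVec, ← mulVec_transpose, hA, dotProduct_comm]
  have hadd := h _ (.inl rfl)
  have hsub := h _ (.inr rfl)
  simp only [mulVec_add, mulVec_sub, mulVec_smul, add_dotProduct, dotProduct_add, sub_dotProduct,
    dotProduct_sub, smul_dotProduct, dotProduct_smul, smul_eq_mul, hyx, hpx, hqy,
    dotProduct_comm y x, abs_le] at hadd hsub
  have hpq : 0 < 4 * (p * q) := by positivity
  refine abs_le.2 ⟨le_of_mul_le_mul_left ?_ hpq, le_of_mul_le_mul_left ?_ hpq⟩ <;>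
    linarith [hadd.1, hadd.2, hsub.1, hsub.2]

theorem OrthogonallyInvariant.measure_lt_abs_bilinearForm_sub_le [IsProbabilityMeasure μ]
    (hμ : OrthogonallyInvariant μ) {τ s : ℝ}
    (hA : ∀ᵐ A ∂μ, (of A)ᵀ = of A ∧ (of A).trace = τ ∧
      ∑ i, ∑ j, A i j ^ 2 ≤ s) {L t : ℝ}
    (hL : 1 ≤ L) (ht : 0 ≤ t) (hLt : 32 * Real.exp 1 * L ^ 4 * s ≤ t ^ 2) (x y : ι → ℝ) :
    μ {A | √(x ⬝ᵥ x) * √(y ⬝ᵥ y) * (t / Fintype.card ι) <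
        |x ⬝ᵥ of A *ᵥ y - x ⬝ᵥ y * (τ / Fintype.card ι)|} ≤
      2 * ENNReal.ofReal (Real.exp (-L)) := by
  let bad (w : ι → ℝ) : Set (ι → ι → ℝ) := {A | w ⬝ᵥ w * (t / Fintype.card ι) <
    |w ⬝ᵥ of A *ᵥ w - w ⬝ᵥ w * (τ / Fintype.card ι)|}
  have hbad (w : ι → ℝ) : μ (bad w) ≤ ENNReal.ofReal (Real.exp (-L)) :=
    hμ.measure_lt_abs_quadraticForm_sub_le (hA.mono fun A h ↦ h.2) hL ht hLt w
  set u := √(y ⬝ᵥ y) • x + √(x ⬝ᵥ x) • y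
  set v := √(y ⬝ᵥ y) • x - √(x ⬝ᵥ x) • y
  calc μ {A | √(x ⬝ᵥ x) * √(y ⬝ᵥ y) * (t / Fintype.card ι) <
        |x ⬝ᵥ of A *ᵥ y - x ⬝ᵥ y * (τ / Fintype.card ι)|}
      ≤ μ (bad u ∪ bad v) := by
        refine measure_mono_ae (hA.mono fun A hA hlt ↦ ?_)
        by_contra hgood
        refine hlt.not_ge (abs_bilinearForm_sub_le_of_quadraticForm hA.1 ?_)
        rintro w (rfl | rfl)
        · exact not_lt.1 fun h ↦ hgood (.inl h)
        · exact not_lt.1 fun h ↦ hgood (.inr h)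
    _ ≤ μ (bad u) + μ (bad v) := measure_union_le _ _
    _ ≤ 2 * ENNReal.ofReal (Real.exp (-L)) := by
        rw [two_mul]
        exact add_le_add (hbad u) (hbad v)

end OrthogonalInvariance

theorem sum_sq_eq_trace_of_isSymm_of_isIdempotentElem {ι R : Type*} [Fintype ι] [CommSemiring R]
    {P : Matrix ι ι R} (hsymm : P.IsSymm) (hidem : IsIdempotentElem P) :
    ∑ i, ∑ j, P i j ^ 2 = P.trace := by
  calc ∑ i, ∑ j, P i j ^ 2 = (P * Pᵀ).trace := by
        simp only [trace, diag_apply, mul_apply, transpose_apply, sq]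
    _ = P.trace := by rw [hsymm.eq, hidem.eq]

theorem exp_one_mul_pow_four_le_sq {k ℓ s : ℝ} (hs : 0 ≤ s) (hℓ : 10 * (k + 1) ^ 2 ≤ ℓ) :
    32 * Real.exp 1 * ((k + 1) * ℓ) ^ 4 * s ≤ (ℓ ^ 3 * √s) ^ 2 := by
  calc 32 * Real.exp 1 * ((k + 1) * ℓ) ^ 4 * s
      ≤ 100 * ((k + 1) * ℓ) ^ 4 * s := by
        gcongr
        linarith [Real.exp_one_lt_d9]
    _ = (10 * (k + 1) ^ 2) ^ 2 * ℓ ^ 4 * s := by ring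
    _ ≤ ℓ ^ 2 * ℓ ^ 4 * s := by gcongr
    _ = (ℓ ^ 3 * √s) ^ 2 := by
      rw [mul_pow, Real.sq_sqrt hs]
      ring

theorem two_mul_exp_neg_mul_log_le_rpow {N : ℝ} (hN : 2 ≤ N) (k : ℝ) :
    2 * Real.exp (-((k + 1) * Real.log N)) ≤ N ^ (-k) := by
  have hN0 : 0 < N := two_pos.trans_le hN
  calc 2 * Real.exp (-((k + 1) * Real.log N)) ≤ N * Real.exp (-((k + 1) * Real.log N)) := by
        gcongr
    _ = Real.exp (Real.log N - (k + 1) * Real.log N) := by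
        rw [sub_eq_add_neg, Real.exp_add, Real.exp_log hN0]
    _ = N ^ (-k) := by
        rw [Real.rpow_def_of_pos hN0]
        ring_nf

theorem stmt_16_general {ι : Type*} [Fintype ι] [DecidableEq ι] {k : ℝ} (hk : 0 < k)
    (hcard : Real.exp (10 * (k + 1) ^ 2) ≤ Fintype.card ι) {μ : Measure (ι → ι → ℝ)}
    [IsProbabilityMeasure μ] (hμ : OrthogonallyInvariant μ) {τ s : ℝ}
    (hA : ∀ᵐ A ∂μ, (of A)ᵀ = of A ∧ (of A).trace = τ ∧
      ∑ i, ∑ j, A i j ^ 2 ≤ s) (x y : ι → ℝ) :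
    ENNReal.ofReal (1 - (Fintype.card ι : ℝ) ^ (-k)) ≤
      μ {A | |x ⬝ᵥ of A *ᵥ y - x ⬝ᵥ y * τ / Fintype.card ι| ≤
        √(x ⬝ᵥ x) * √(y ⬝ᵥ y) * Real.log (Fintype.card ι) ^ 3 * √s / Fintype.card ι} := by
  set N : ℝ := ((Fintype.card ι : ℕ) : ℝ)
  have hN : 0 < N := (Real.exp_pos _).trans_le hcard
  have hlog : 10 * (k + 1) ^ 2 ≤ Real.log N := (Real.le_log_iff_exp_le hN).2 hcard
  have hlog_one : 1 ≤ Real.log N := by nlinarith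
  have hL : 1 ≤ (k + 1) * Real.log N := by nlinarith
  have hs : 0 ≤ s := by
    obtain ⟨A, -, -, hA⟩ := hA.exists
    exact (Finset.sum_nonneg fun i _ ↦ Finset.sum_nonneg fun j _ ↦ sq_nonneg _).trans hA
  have hdev := hμ.measure_lt_abs_bilinearForm_sub_le hA hL (by positivity)
    (exp_one_mul_pow_four_le_sq hs hlog) x y
  have hprob : 2 * ENNReal.ofReal (Real.exp (-((k + 1) * Real.log N))) ≤
      ENNReal.ofReal (N ^ (-k)) := by
    rw [← ENNReal.ofReal_ofNat 2, ← ENNReal.ofReal_mul zero_le_two]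
    exact ENNReal.ofReal_le_ofReal (two_mul_exp_neg_mul_log_le_rpow
      (by linarith [Real.log_le_sub_one_of_pos hN]) k)
  rw [ENNReal.ofReal_sub _ (by positivity), ENNReal.ofReal_one, tsub_le_iff_right,
    ← measure_univ (μ := μ)]
  refine (measure_univ_le_add_compl _).trans (add_le_add_right ?_ _)
  simp only [Set.compl_ofPred, not_le]
  simp only [mul_assoc, mul_div_assoc] at hdev ⊢
  exact hdev.trans hprob

/-- quadratic forms of a random projection: fix `x, y ∈ ℝ^N` with
`α = ⟨x, y⟩`, and let `P` be the orthogonal projection onto a uniformly random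
`n`-dimensional subspace of `ℝ^N` — formalized as any probability measure on matrices
supported on symmetric idempotents of trace `n` and invariant under conjugation by every
orthogonal matrix (this characterizes the uniform Grassmannian distribution). There is a
universal constant `C > 0` such that for every `k > 0` there is `N₀` with: for all
`N ≥ N₀`, with probability at least `1 - N^{-k}`,
`|xᵀPy - α n/N| ≤ ‖x‖ ‖y‖ (log N)^C √n / N`. -/
theorem stmt_16 :
    ∃ C : ℝ, 0 < C ∧
      ∀ k : ℝ, 0 < k → ∃ N₀ : ℕ, ∀ N n : ℕ, N₀ ≤ N → 1 ≤ n → n ≤ N →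
        ∀ x y : Fin N → ℝ,
        ∀ (μP : Measure (Fin N → Fin N → ℝ)) [IsProbabilityMeasure μP],
          (∀ᵐ P ∂μP, (Matrix.of P)ᵀ = Matrix.of P ∧
            Matrix.of P * Matrix.of P = Matrix.of P ∧
            (Matrix.of P).trace = (n : ℝ)) →
          (∀ R : Matrix (Fin N) (Fin N) ℝ, Rᵀ * R = 1 →
            Measure.map (fun P => fun i j => (Rᵀ * Matrix.of P * R) i j) μP = μP) →
          ENNReal.ofReal (1 - (N : ℝ) ^ (-k)) ≤
            μP {P | |(∑ i, x i * (Matrix.of P).mulVec y i)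
                  - (∑ i, x i * y i) * n / N|
                ≤ eucNorm x * eucNorm y * (Real.log N) ^ C * Real.sqrt n / N} := by
  refine ⟨3, three_pos, fun k hk ↦ ⟨⌈Real.exp (10 * (k + 1) ^ 2)⌉₊, ?_⟩⟩
  intro N n hN _ _ x y μP _ hproj hinv
  have hP : ∀ᵐ P ∂μP, (Matrix.of P)ᵀ = Matrix.of P ∧ (Matrix.of P).trace = (n : ℝ) ∧
      ∑ i, ∑ j, P i j ^ 2 ≤ (n : ℝ) := hproj.mono fun P ⟨hsymm, hidem, htrace⟩ ↦
    ⟨hsymm, htrace, ((sum_sq_eq_trace_of_isSymm_of_isIdempotentElem hsymm hidem).trans htrace).le⟩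
  have hcard : Real.exp (10 * (k + 1) ^ 2) ≤ Fintype.card (Fin N) := by
    simpa using Nat.ceil_le.1 hN
  simpa [eucNorm, dotProduct, sq] using stmt_16_general hk hcard hinv hP x y
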